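/- Fix positive reals N, B, N₀, h and reals η ≥ 0, m ≥ 1, and let t(p) = N / (B · log₂(1 + h·p / (N₀·B))). Then the function p ↦ ((η + t(p))^m / m)² is convex on (0, ∞). -/

import Mathlib

/-!
Convexity is propagated through a chain of compositions. With `c = h / (N₀ B)`, the rate
`log (1 + c p)` is concave and positive for `p > 0`; its reciprocal is convex because `x ↦ x⁻¹` is
convex and decreasing on the positive reals, so `t`, a positive multiple of it, is convex and
positive. The maps `a ↦ a ^ m` (for `m ≥ 1`) and `a ↦ a ^ 2` are convex and increasing on the
nonnegative reals, hence preserve convexity of nonnegative functions.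
-/

lemma convexOn_inv_log_one_add_mul {c : ℝ} (hc : 0 < c) :
    ConvexOn ℝ (Set.Ioi 0) (fun p : ℝ => (Real.log (1 + c * p))⁻¹) := by
  have hpos : ∀ p ∈ Set.Ioi (0 : ℝ), 0 < Real.log (1 + c * p) := fun p hp =>
    Real.log_pos (by have := mul_pos hc (Set.mem_Ioi.1 hp); linarith)
  refine ⟨convex_Ioi 0, fun x hx y hy a b ha hb hab => ?_⟩
  have hx1 : 0 < 1 + c * x := by have := mul_pos hc (Set.mem_Ioi.1 hx); linarith
  have hy1 : 0 < 1 + c * y := by have := mul_pos hc (Set.mem_Ioi.1 hy); linarith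
  have hconc := strictConcaveOn_log_Ioi.concaveOn.2 hx1 hy1 ha hb hab
  have hinv := (convexOn_zpow (𝕜 := ℝ) (-1)).2 (hpos x hx) (hpos y hy) ha hb hab
  have hcomb : 0 < a • Real.log (1 + c * x) + b • Real.log (1 + c * y) :=
    convex_Ioi (0 : ℝ) (hpos x hx) (hpos y hy) ha hb hab
  have harg : 1 + c * (a • x + b • y) = a • (1 + c * x) + b • (1 + c * y) := by
    simp only [smul_eq_mul]
    linear_combination -hab
  simp only [zpow_neg_one] at hinv
  simp only [harg]
  exact (inv_anti₀ hcomb hconc).trans hinv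

lemma ConvexOn.rpow_of_nonneg {s : Set ℝ} {f : ℝ → ℝ} (hf : ConvexOn ℝ s f)
    (hf0 : ∀ x ∈ s, 0 ≤ f x) {m : ℝ} (hm : 1 ≤ m) : ConvexOn ℝ s (fun x => f x ^ m) := by
  refine ⟨hf.1, fun x hx y hy a b ha hb hab => ?_⟩
  exact (Real.rpow_le_rpow (hf0 _ (hf.1 hx hy ha hb hab)) (hf.2 hx hy ha hb hab)
    (by linarith)).trans ((convexOn_rpow hm).2 (hf0 x hx) (hf0 y hy) ha hb hab)

theorem stmt_16 (N B N₀ h η m : ℝ) (hN : 0 < N) (hB : 0 < B) (hN₀ : 0 < N₀) (hh : 0 < h)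
    (hη : 0 ≤ η) (hm : 1 ≤ m)
    (t : ℝ → ℝ) (ht : ∀ p, t p = N / (B * Real.logb 2 (1 + h * p / (N₀ * B)))) :
    ConvexOn ℝ (Set.Ioi 0) (fun p : ℝ => ((η + t p) ^ m / m) ^ 2) := by
  have hm0 : 0 < m := by linarith
  have hc : 0 < h / (N₀ * B) := by positivity
  have hlog2 : 0 < Real.log 2 := Real.log_pos (by norm_num)
  have hC : 0 ≤ N * Real.log 2 / B := by positivity
  have ht' : t = fun p => (N * Real.log 2 / B) • (Real.log (1 + h / (N₀ * B) * p))⁻¹ := by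
    funext p
    rw [ht, Real.logb, mul_div_right_comm h p, smul_eq_mul]
    simp only [div_eq_mul_inv, mul_inv, inv_inv]
    ring
  have htconv : ConvexOn ℝ (Set.Ioi 0) t := by
    rw [ht']
    exact (convexOn_inv_log_one_add_mul hc).smul hC
  have hage : ConvexOn ℝ (Set.Ioi 0) (fun p => η + t p) :=
    (convexOn_const η (convex_Ioi 0)).add htconv
  have hage0 : ∀ p ∈ Set.Ioi (0 : ℝ), 0 ≤ η + t p := by
    intro p hp
    have hlog : 0 ≤ Real.log (1 + h / (N₀ * B) * p) :=
      Real.log_nonneg (by have := mul_pos hc (Set.mem_Ioi.1 hp); linarith)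
    rw [ht']
    exact add_nonneg hη (mul_nonneg hC (inv_nonneg.2 hlog))
  have hstale : ConvexOn ℝ (Set.Ioi 0) (fun p => (η + t p) ^ m / m) := by
    simpa only [smul_eq_mul, div_eq_inv_mul] using
      (hage.rpow_of_nonneg hage0 hm).smul (inv_nonneg.2 hm0.le)
  exact hstale.pow (fun {p} hp => div_nonneg (Real.rpow_nonneg (hage0 p hp) m) hm0.le) 2
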